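/- There exists a compact set L ⊆ ℂ such that: (i) every function f holomorphic on ℂ∖L, such that f and its derivative f′ extend continuously to the closure of ℂ∖L in ℂ and f has a finite limit at infinity, is constant (so the 1-continuous analytic capacity a_1(L) is zero); and (ii) there exists a nonconstant function continuous on ℂ, holomorphic on ℂ∖L, with a finite limit at infinity (so the continuous analytic capacity a_0(L) is strictly positive). In particular a_1 and a_0 are essentially different capacities. -/

import Mathlib

open Filter Set

/-!
Take `L = K × K` with `K ⊆ ℝ` compact, of positive length and with dense complement. If `f` and
`f'` extend continuously across `L`, to `g` and `h` say, then `g' = h` on every horizontal and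
vertical line through `Kᶜ`. Integrating along these lines and passing to the limit, the integral of
`h` along any horizontal or vertical segment is the increment of `g`, so `g` is a primitive of `h`
and Liouville's theorem applies. On the other hand `L` has positive area, so the Cauchy transform of
its area measure, which is continuous on `ℂ` because `1 / z` is locally integrable, behaves like
`area(L) / z` at infinity and hence is not constant.
-/

section DenseLines

open MeasureTheory Complex Topology

variable {E : Type*} [NormedAddCommGroup E] [NormedSpace ℂ E]

lemma intervalIntegral_eq_sub_of_hasDerivAt_of_dense {X F : Type*} [TopologicalSpace X]
    [NormedAddCommGroup F] [NormedSpace ℝ F] [CompleteSpace F] {S : Set X} (hS : Dense S)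
    {G G' : X → ℝ → F} (hG : ∀ t, Continuous (G · t)) (hG' : Continuous G'.uncurry)
    (hderiv : ∀ s ∈ S, ∀ t, HasDerivAt (G s) (G' s t) t) (s : X) (a b : ℝ) :
    ∫ t in a..b, G' s t = G s b - G s a := by
  have heq : (fun s ↦ ∫ t in a..b, G' s t) = fun s ↦ G s b - G s a :=
    Continuous.ext_on hS
      (intervalIntegral.continuous_parametric_intervalIntegral_of_continuous' hG' a b)
      ((hG b).sub (hG a)) fun s hs ↦
        intervalIntegral.integral_eq_sub_of_hasDerivAt (fun t _ ↦ hderiv s hs t)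
          ((hG'.uncurry_left s).intervalIntegrable a b)
  exact congrFun heq s

variable [CompleteSpace E] {K₁ K₂ : Set ℝ} {f g h : ℂ → E}

lemma wedgeIntegral_eq_sub_of_hasDerivAt_compl_reProdIm (hK₁ : Dense K₁ᶜ) (hK₂ : Dense K₂ᶜ)
    (hg : Continuous g) (hh : Continuous h) (hderiv : ∀ z ∉ K₁ ×ℂ K₂, HasDerivAt g (h z) z)
    (z w : ℂ) : wedgeIntegral z w h = g w - g z := by
  have horizontal (y a b : ℝ) : ∫ x in a..b, h (x + y * I) = g (b + y * I) - g (a + y * I) := by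
    refine intervalIntegral_eq_sub_of_hasDerivAt_of_dense hK₂
      (G := fun y x ↦ g (x + y * I)) (G' := fun y x ↦ h (x + y * I)) (fun x ↦ by fun_prop)
      (by simp only [Function.uncurry_def]; fun_prop) (fun y hy x ↦ ?_) y a b
    have hline : HasDerivAt (fun x : ℝ ↦ (x : ℂ) + y * I) 1 x :=
      (ofRealCLM.hasDerivAt (x := x)).add_const _
    exact ((hderiv (x + y * I) (fun hmem ↦ hy (by simpa using hmem.2))).scomp x hline).congr_deriv
      (one_smul ℂ _)
  have vertical (x a b : ℝ) :
      I • ∫ y in a..b, h (x + y * I) = g (x + b * I) - g (x + a * I) := by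
    rw [← intervalIntegral.integral_smul]
    refine intervalIntegral_eq_sub_of_hasDerivAt_of_dense hK₁
      (G := fun x y ↦ g (x + y * I)) (G' := fun x y ↦ I • h (x + y * I)) (fun y ↦ by fun_prop)
      (by simp only [Function.uncurry_def]; fun_prop) (fun x hx y ↦ ?_) x a b
    have hline : HasDerivAt (fun y : ℝ ↦ (x : ℂ) + y * I) I y := by
      simpa using ((ofRealCLM.hasDerivAt (x := y)).mul_const I).const_add (x : ℂ)
    exact (hderiv (x + y * I) (fun hmem ↦ hx (by simpa using hmem.1))).scomp y hline
  simp only [wedgeIntegral, horizontal, vertical, re_add_im]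
  abel

lemma hasDerivAt_of_wedgeIntegral_eq_sub (hh : Continuous h)
    (hwedge : ∀ z w, wedgeIntegral z w h = g w - g z) (z : ℂ) : HasDerivAt g (h z) z := by
  have hconservative : IsConservativeOn h (Metric.ball 0 (‖z‖ + 1)) := fun z w _ ↦ by
    rw [hwedge, hwedge, neg_sub]
  have hprimitive := hconservative.hasDerivAt_wedgeIntegral hh.continuousOn (z := z) (by simp)
  simp only [hwedge] at hprimitive
  exact (hasDerivAt_sub_const_iff _).1 hprimitive

lemma differentiable_of_continuous_extension_deriv (hL : IsClosed (K₁ ×ℂ K₂))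
    (hK₁ : Dense K₁ᶜ) (hK₂ : Dense K₂ᶜ) (hf : DifferentiableOn ℂ f (K₁ ×ℂ K₂)ᶜ)
    (hg : Continuous g) (hgf : EqOn g f (K₁ ×ℂ K₂)ᶜ)
    (hh : Continuous h) (hhf : EqOn h (deriv f) (K₁ ×ℂ K₂)ᶜ) : Differentiable ℂ g := by
  have hderiv (z : ℂ) (hz : z ∉ K₁ ×ℂ K₂) : HasDerivAt g (h z) z := by
    have hnhds : (K₁ ×ℂ K₂)ᶜ ∈ 𝓝 z := hL.isOpen_compl.mem_nhds hz
    rw [hhf hz]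
    exact (hf.hasDerivAt hnhds).congr_of_eventuallyEq (hgf.eventuallyEq_of_mem hnhds)
  exact fun z ↦ (hasDerivAt_of_wedgeIntegral_eq_sub hh
    (wedgeIntegral_eq_sub_of_hasDerivAt_compl_reProdIm hK₁ hK₂ hg hh hderiv) z).differentiableAt

lemma dense_compl_reProdIm (hK₁ : Dense K₁ᶜ) : Dense (K₁ ×ℂ K₂)ᶜ := by
  rw [← interior_eq_empty_iff_dense_compl] at hK₁ ⊢
  rw [interior_reProdIm, hK₁, reProdIm_eq_empty.2 (.inl rfl)]

lemma eqOn_const_of_continuousOn_extension_deriv (hL : IsCompact (K₁ ×ℂ K₂))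
    (hK₁ : Dense K₁ᶜ) (hK₂ : Dense K₂ᶜ) (hf : DifferentiableOn ℂ f (K₁ ×ℂ K₂)ᶜ)
    (hg : ContinuousOn g (closure (K₁ ×ℂ K₂)ᶜ)) (hgf : EqOn g f (K₁ ×ℂ K₂)ᶜ)
    (hh : ContinuousOn h (closure (K₁ ×ℂ K₂)ᶜ)) (hhf : EqOn h (deriv f) (K₁ ×ℂ K₂)ᶜ)
    {c : E} (hc : Tendsto f (cocompact ℂ) (𝓝 c)) : EqOn f (fun _ ↦ c) (K₁ ×ℂ K₂)ᶜ := by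
  rw [(dense_compl_reProdIm hK₁).closure_eq, continuousOn_univ] at hg hh
  have hentire : Differentiable ℂ g :=
    differentiable_of_continuous_extension_deriv hL.isClosed hK₁ hK₂ hf hg hgf hh hhf
  have hgc : Tendsto g (cocompact ℂ) (𝓝 c) :=
    hc.congr' (hgf.symm.eventuallyEq_of_mem hL.compl_mem_cocompact)
  intro z hz
  rw [← hgf hz, hentire.apply_eq_of_tendsto_cocompact z hgc]

end DenseLines

section PositiveMeasure

open MeasureTheory Complex

lemma exists_isCompact_dense_compl_measure_pos {X : Type*} [TopologicalSpace X] [T1Space X]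
    [TopologicalSpace.SeparableSpace X] [MeasurableSpace X] [OpensMeasurableSpace X]
    (μ : Measure X) [μ.InnerRegular] [NullSingletonClass μ] [NeZero μ] :
    ∃ K : Set X, IsCompact K ∧ Dense Kᶜ ∧ 0 < μ K := by
  obtain ⟨D, hD, hDdense⟩ := TopologicalSpace.exists_countable_dense X
  have hpos : 0 < μ Dᶜ := by
    rw [compl_eq_univ_sdiff, measure_sdiff_null (hD.measure_zero μ)]
    exact NeZero.pos _
  obtain ⟨K, hKD, hK, hKpos⟩ := hD.measurableSet.compl.exists_lt_isCompact hpos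
  exact ⟨K, hK, hDdense.mono (subset_compl_comm.1 hKD), hKpos⟩

lemma volume_reProdIm (s t : Set ℝ) : volume (s ×ℂ t) = volume s * volume t := by
  rw [← Measure.prod_prod, ← Measure.volume_eq_prod,
    ← volume_preserving_equiv_real_prod.measure_preimage_equiv]
  rfl

end PositiveMeasure

section Translation

open MeasureTheory Topology Pointwise

variable {G E : Type*} [AddGroup G] [TopologicalSpace G] [IsTopologicalAddGroup G]
  [MeasurableSpace G] [BorelSpace G] {μ : Measure G} [μ.IsAddLeftInvariant]
  [IsLocallyFiniteMeasure μ] [μ.InnerRegularCompactLTTop]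
  [NormedAddCommGroup E] [NormedSpace ℝ E] {k : G → E}

lemma continuous_setIntegral_add_left_of_integrable (hk : Integrable k μ) (s : Set G) :
    Continuous fun z ↦ ∫ w in s, k (z + w) ∂μ := by
  let K : Lp E 1 μ := (memLp_one_iff_integrable.2 hk).toLp k
  have : Fact ((1 : ENNReal) ≠ ⊤) := ⟨ENNReal.one_ne_top⟩
  have htranslate : Continuous fun z : G ↦ DomAddAct.mk z +ᵥ K :=
    DomAddAct.continuous_mk.vadd continuous_const
  refine ((continuous_setIntegral s).comp htranslate).congr fun z ↦ ?_
  refine integral_congr_ae (ae_restrict_of_ae ?_)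
  exact MemLp.coeFn_toLp ((memLp_one_iff_integrable.2 hk).comp_measurePreserving
    (measurePreserving_vadd z μ))

lemma continuous_setIntegral_add_left_of_locallyIntegrable [T2Space G] [LocallyCompactSpace G]
    (hk : LocallyIntegrable k μ) {s : Set G} (hs : IsCompact s) :
    Continuous fun z ↦ ∫ w in s, k (z + w) ∂μ := by
  refine continuous_iff_continuousAt.2 fun z₀ ↦ ?_
  obtain ⟨U, hU, hz₀⟩ := exists_compact_mem_nhds z₀
  have hUs : IsCompact (U + s) := hU.add hs
  have htruncated : Integrable ((U + s).indicator k) μ :=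
    (hk.integrableOn_isCompact hUs).integrable_indicator hUs.measurableSet
  refine (continuous_setIntegral_add_left_of_integrable htruncated s).continuousAt.congr ?_
  filter_upwards [hz₀] with z hz
  exact setIntegral_congr_fun hs.measurableSet fun w hw ↦
    indicator_of_mem (add_mem_add hz hw) k

end Translation

section CauchyTransform

open MeasureTheory Complex Topology Bornology

/-- The Cauchy transform `z ↦ ∫ (z - w)⁻¹ dμ(w)` of a measure `μ` on `ℂ`. For `μ` finite
and compactly supported it is holomorphic off the support and vanishes at infinity. The kernel is
`1 / (z - w)`, without the factor `1 / π` or `1 / (2 π i)` of other conventions, and the value is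
`0` where the integral diverges. -/
noncomputable def cauchyTransform (μ : Measure ℂ) (z : ℂ) : ℂ :=
  ∫ w, (z - w)⁻¹ ∂μ

lemma locallyIntegrable_complex_inv : LocallyIntegrable (fun z : ℂ ↦ z⁻¹) :=
  locallyIntegrable_of_norm_le_rpow (C := 1) (α := 1) (by simp) (by simp)
    (Eventually.of_forall fun z ↦ by simp [Real.rpow_neg_one])
    measurable_inv.aestronglyMeasurable

lemma continuous_cauchyTransform_restrict {L : Set ℂ} (hL : IsCompact L) :
    Continuous (cauchyTransform (volume.restrict L)) := by
  have hneg : Continuous fun z : ℂ ↦ ∫ w in L, -(z + w)⁻¹ :=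
    continuous_setIntegral_add_left_of_locallyIntegrable locallyIntegrable_complex_inv.neg hL
  refine (hneg.comp continuous_neg).congr fun z ↦ ?_
  simp only [cauchyTransform, Function.comp_apply, ← inv_neg, neg_add, neg_neg, sub_eq_add_neg]

variable {μ : Measure ℂ} [IsFiniteMeasure μ] {L : Set ℂ}

lemma hasDerivAt_cauchyTransform (hL : IsClosed L) (hμ : ∀ᵐ w ∂μ, w ∈ L) {z₀ : ℂ}
    (hz₀ : z₀ ∉ L) : HasDerivAt (cauchyTransform μ) (∫ w, -1 / (z₀ - w) ^ 2 ∂μ) z₀ := by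
  obtain ⟨δ, hδ, hball⟩ := Metric.isOpen_iff.1 hL.isOpen_compl z₀ hz₀
  have hfar {z w : ℂ} (hz : z ∈ Metric.ball z₀ (δ / 2)) (hw : w ∈ L) : δ / 2 ≤ ‖z - w‖ := by
    have hwz₀ : δ ≤ dist w z₀ := not_lt.1 fun hlt ↦ hball (Metric.mem_ball.2 hlt) hw
    rw [← dist_eq_norm]
    linarith [dist_triangle_left w z₀ z, Metric.mem_ball.1 hz]
  have hint : Integrable (fun w ↦ (z₀ - w)⁻¹) μ := by
    refine Integrable.of_bound (by fun_prop) (δ / 2)⁻¹ (hμ.mono fun w hw ↦ ?_)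
    rw [norm_inv]
    exact inv_anti₀ (half_pos hδ) (hfar (Metric.mem_ball_self (half_pos hδ)) hw)
  refine (hasDerivAt_integral_of_dominated_loc_of_deriv_le
    (F := fun z w ↦ (z - w)⁻¹) (F' := fun z w ↦ -1 / (z - w) ^ 2)
    (bound := fun _ ↦ 1 / (δ / 2) ^ 2) (Metric.ball_mem_nhds z₀ (half_pos hδ))
    (Eventually.of_forall fun z ↦ by fun_prop) hint
    (Measurable.aestronglyMeasurable (by fun_prop)) ?_
    (integrable_const _) ?_).2
  · refine hμ.mono fun w hw z hz ↦ ?_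
    have hdist := hfar hz hw
    rw [norm_div, norm_neg, norm_one, norm_pow]
    gcongr
  · refine hμ.mono fun w hw z hz ↦ ?_
    have hne : z - w ≠ 0 := norm_pos_iff.1 ((half_pos hδ).trans_le (hfar hz hw))
    exact ((hasDerivAt_id z).sub_const w).fun_inv hne

lemma differentiableOn_cauchyTransform (hL : IsClosed L) (hμ : ∀ᵐ w ∂μ, w ∈ L) :
    DifferentiableOn ℂ (cauchyTransform μ) Lᶜ := fun _ hz ↦
  (hasDerivAt_cauchyTransform hL hμ hz).differentiableAt.differentiableWithinAt

lemma tendsto_mul_inv_sub_cobounded {𝕜 : Type*} [NormedField 𝕜] (w : 𝕜) :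
    Tendsto (fun z ↦ z * (z - w)⁻¹) (cobounded 𝕜) (𝓝 1) := by
  have hlim : Tendsto (fun z : 𝕜 ↦ (1 - w * z⁻¹)⁻¹) (cobounded 𝕜) (𝓝 (1 - w * 0)⁻¹) :=
    ((tendsto_inv₀_cobounded.const_mul w).const_sub 1).inv₀ (by simp)
  rw [mul_zero, sub_zero, inv_one] at hlim
  refine hlim.congr' ?_
  filter_upwards [eventually_ne_cobounded 0] with z hz
  field_simp

lemma norm_mul_inv_sub_le_two {𝕜 : Type*} [NormedField 𝕜] {z w : 𝕜} (h : 2 * ‖w‖ ≤ ‖z‖) :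
    ‖z * (z - w)⁻¹‖ ≤ 2 := by
  rw [norm_mul, norm_inv]
  refine mul_inv_le_of_le_mul₀ (norm_nonneg _) zero_le_two ?_
  linarith [norm_sub_norm_le z w]

lemma tendsto_mul_cauchyTransform_cobounded (hL : IsBounded L) (hμ : ∀ᵐ w ∂μ, w ∈ L) :
    Tendsto (fun z ↦ z * cauchyTransform μ z) (cobounded ℂ) (𝓝 (μ.real univ)) := by
  obtain ⟨R, hR⟩ := hL.exists_norm_le
  have : (cobounded ℂ).IsCountablyGenerated := by
    rw [← comap_norm_atTop]; infer_instance
  have hlim : Tendsto (fun z ↦ ∫ w, z * (z - w)⁻¹ ∂μ) (cobounded ℂ) (𝓝 (∫ _, 1 ∂μ)) := by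
    refine tendsto_integral_filter_of_dominated_convergence (fun _ ↦ 2)
      (Eventually.of_forall fun z ↦ by fun_prop) ?_ (integrable_const _)
      (Eventually.of_forall tendsto_mul_inv_sub_cobounded)
    filter_upwards [tendsto_norm_cobounded_atTop.eventually_ge_atTop (2 * R)] with z hz
    exact hμ.mono fun w hw ↦ norm_mul_inv_sub_le_two (by linarith [hR w hw])
  simpa [cauchyTransform, integral_const_mul] using hlim

lemma tendsto_cauchyTransform_cobounded (hL : IsBounded L) (hμ : ∀ᵐ w ∂μ, w ∈ L) :
    Tendsto (cauchyTransform μ) (cobounded ℂ) (𝓝 0) := by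
  have hlim := tendsto_inv₀_cobounded.mul (tendsto_mul_cauchyTransform_cobounded hL hμ)
  rw [zero_mul] at hlim
  refine hlim.congr' ?_
  filter_upwards [eventually_ne_cobounded 0] with z hz
  exact inv_mul_cancel_left₀ hz _

lemma exists_cauchyTransform_ne [NeZero μ] (hL : IsBounded L) (hμ : ∀ᵐ w ∂μ, w ∈ L) :
    ∃ z w, cauchyTransform μ z ≠ cauchyTransform μ w := by
  by_contra! hconst
  have hzero (z : ℂ) : cauchyTransform μ z = 0 :=
    tendsto_nhds_unique (tendsto_const_nhds.congr (hconst z))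
      (tendsto_cauchyTransform_cobounded hL hμ)
  have hlim := tendsto_mul_cauchyTransform_cobounded hL hμ
  simp only [hzero, mul_zero] at hlim
  have hmass : (μ.real univ : ℂ) = 0 := tendsto_nhds_unique hlim tendsto_const_nhds
  exact measureReal_univ_ne_zero (ofReal_eq_zero.1 hmass)

lemma exists_continuous_differentiableOn_compl_of_volume_ne_zero (hL : IsCompact L)
    (hvol : volume L ≠ 0) :
    ∃ f : ℂ → ℂ, Continuous f ∧ DifferentiableOn ℂ f Lᶜ ∧
      Tendsto f (cocompact ℂ) (𝓝 0) ∧ ∃ z w, f z ≠ f w := by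
  have : IsFiniteMeasure (volume.restrict L) := isFiniteMeasure_restrict.2 hL.measure_lt_top.ne
  have : NeZero (volume.restrict L) := ⟨Measure.restrict_eq_zero.not.2 hvol⟩
  have hmem : ∀ᵐ w ∂volume.restrict L, w ∈ L := ae_restrict_mem hL.measurableSet
  have hlim := tendsto_cauchyTransform_cobounded hL.isBounded hmem
  rw [Metric.cobounded_eq_cocompact] at hlim
  exact ⟨cauchyTransform (volume.restrict L), continuous_cauchyTransform_restrict hL,
    differentiableOn_cauchyTransform hL.isClosed hmem, hlim,
    exists_cauchyTransform_ne hL.isBounded hmem⟩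

end CauchyTransform

/-- There exists a compact set `L ⊆ ℂ` such that: (i) every `f` holomorphic on
`ℂ \ L`, such that `f` and `f'` extend continuously to the closure of `ℂ \ L` in `ℂ`
and `f` has a finite limit at infinity, is constant (so `a₁(L) = 0`); and (ii) there
is a nonconstant function continuous on `ℂ`, holomorphic on `ℂ \ L`, with a finite
limit at infinity (so `a₀(L) > 0`). Hence `a₁` and `a₀` are essentially different. -/
theorem exists_compact_a1_zero_a0_pos :
    ∃ L : Set ℂ, IsCompact L ∧
      (∀ f : ℂ → ℂ, DifferentiableOn ℂ f Lᶜ →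
        (∃ g : ℂ → ℂ, ContinuousOn g (closure Lᶜ) ∧ Set.EqOn g f Lᶜ) →
        (∃ g : ℂ → ℂ, ContinuousOn g (closure Lᶜ) ∧ Set.EqOn g (deriv f) Lᶜ) →
        (∃ c : ℂ, Tendsto f (cocompact ℂ) (nhds c)) →
        ∃ c : ℂ, ∀ z ∈ Lᶜ, f z = c) ∧
      (∃ f : ℂ → ℂ, Continuous f ∧ DifferentiableOn ℂ f Lᶜ ∧
        (∃ c : ℂ, Tendsto f (cocompact ℂ) (nhds c)) ∧
        ∃ z w : ℂ, f z ≠ f w) := by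
  obtain ⟨K, hK, hKdense, hKpos⟩ :=
    exists_isCompact_dense_compl_measure_pos (MeasureTheory.volume : MeasureTheory.Measure ℝ)
  have hL : IsCompact (K ×ℂ K) := hK.reProdIm hK
  refine ⟨K ×ℂ K, hL, ?_, ?_⟩
  · rintro f hf ⟨g, hg, hgf⟩ ⟨h, hh, hhf⟩ ⟨c, hc⟩
    exact ⟨c, eqOn_const_of_continuousOn_extension_deriv hL hKdense hKdense hf hg hgf hh hhf hc⟩
  · have hLpos : MeasureTheory.volume (K ×ℂ K) ≠ 0 := by
      rw [volume_reProdIm]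
      exact mul_ne_zero hKpos.ne' hKpos.ne'
    obtain ⟨f, hf, hfL, hf0, hne⟩ :=
      exists_continuous_differentiableOn_compl_of_volume_ne_zero hL hLpos
    exact ⟨f, hf, hfL, ⟨0, hf0⟩, hne⟩
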